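/- (Anisotropic degenerate coercivity for the initial characteristic function of a line-concentrated measure.) Let 0 < s < 1 and let the collision kernel b satisfy b(cos θ)·θ^{2+2s} → K as θ → 0+ for some K > 0. Let F₀ be a Borel probability measure on ℝ³ concentrated on the third coordinate axis (F₀({(0,0,v₃) : v₃ ∈ ℝ}) = 1) but not a single Dirac mass, and let ψ₀ be its characteristic function. Then there exist R > 0 and c > 0 such that for every measurable h : ℝ³ → ℂ with ∫ (1+|ξ|²)^s |h(ξ)|² dξ < ∞: ∫_{ℝ³} ( ∫_{S²} b(ξ·σ/|ξ|)(1 − |ψ₀(ξ⁻)|) dσ ) |h(ξ)|² dξ ≥ c ∫_{{|ξ| ≥ R}} ( |ξ₁|² + |ξ₂|² + |ξ₃| )^{s} |h(ξ)|² dξ, where ξ⁻ = (ξ − |ξ|σ)/2. -/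

import Mathlib

noncomputable section

open MeasureTheory Real Filter Metric Set
open scoped RealInnerProductSpace Topology

/-- ℝ³ as a Euclidean space. -/
abbrev E3 : Type := EuclideanSpace ℝ (Fin 3)

/-- The surface measure on the unit sphere S² ⊂ ℝ³. -/
def sphμ : Measure (sphere (0 : E3) 1) := (volume : Measure E3).toSphere

/-- The characteristic function (Fourier transform) of a Borel measure on ℝ³,
`ψ(ξ) = ∫ e^{-i v·ξ} dΨ(v)`. -/
def charFn (Ψ : Measure E3) (ξ : E3) : ℂ :=
  ∫ v, Complex.exp (-(Complex.I * (⟪v, ξ⟫ : ℂ))) ∂Ψ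

/-- `ψ` is a characteristic function of some Borel probability measure on ℝ³. -/
def IsCharFn (ψ : E3 → ℂ) : Prop :=
  ∃ Ψ : Measure E3, IsProbabilityMeasure Ψ ∧ ψ = charFn Ψ

/-- Finiteness of `‖φ - 1‖_α`, i.e. the quantitative part of membership in `𝒦^α`. -/
def KBdd (α : ℝ) (φ : E3 → ℂ) : Prop :=
  ∃ C : ℝ, ∀ ξ : E3, ξ ≠ 0 → ‖φ ξ - 1‖ ≤ C * ‖ξ‖ ^ α

/-- Membership in the space `𝒦^α`. -/
def memK (α : ℝ) (φ : E3 → ℂ) : Prop := IsCharFn φ ∧ KBdd α φ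

/-- The distance `‖φ - φ'‖_α = sup_{ξ ≠ 0} |φ(ξ) - φ'(ξ)|/|ξ|^α` on `𝒦^α`. -/
def Kdist (α : ℝ) (φ φ' : E3 → ℂ) : ℝ :=
  ⨆ ξ : {ξ : E3 // ξ ≠ 0}, ‖φ ξ.1 - φ' ξ.1‖ / ‖(ξ.1 : E3)‖ ^ α

/-- `ξ⁺ = ξ/2 + (|ξ|/2)σ`. -/
def xiPlus (ξ : E3) (σ : sphere (0 : E3) 1) : E3 := (1/2 : ℝ) • ξ + (‖ξ‖ / 2) • (σ : E3)

/-- `ξ⁻ = ξ/2 - (|ξ|/2)σ`. -/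
def xiMinus (ξ : E3) (σ : sphere (0 : E3) 1) : E3 := (1/2 : ℝ) • ξ - (‖ξ‖ / 2) • (σ : E3)

/-- The Bobylev collision integrand at time `t`, frequency `ξ`, direction `σ`. -/
def bobylevIntegrand (b : ℝ → ℝ) (ψ : ℝ → E3 → ℂ) (t : ℝ) (ξ : E3)
    (σ : sphere (0 : E3) 1) : ℂ :=
  (b (⟪ξ, (σ : E3)⟫ / ‖ξ‖) : ℂ) *
    (ψ t (xiPlus ξ σ) * ψ t (xiMinus ξ σ) - ψ t ξ)

/-- `ψ : [0,∞) × ℝ³ → ℂ` is a solution of the Fourier-transformed (Bobylev)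
homogeneous Boltzmann Cauchy problem with collision kernel `b` and initial datum `ψ₀`. -/
structure IsBobylevSolution (b : ℝ → ℝ) (ψ : ℝ → E3 → ℂ) (ψ₀ : E3 → ℂ) : Prop where
  cont : ContinuousOn (fun p : ℝ × E3 => ψ p.1 p.2) (Set.Ici 0 ×ˢ Set.univ)
  init : ψ 0 = ψ₀
  isCharFn : ∀ t ≥ 0, IsCharFn (ψ t)
  integrable : ∀ t ≥ 0, ∀ ξ : E3, Integrable (bobylevIntegrand b ψ t ξ) sphμ
  eq : ∀ t ≥ 0, ∀ ξ : E3, HasDerivWithinAt (fun τ => ψ τ ξ)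
      (∫ σ, bobylevIntegrand b ψ t ξ σ ∂sphμ) (Set.Ici 0) t

/-- Continuity of `t ↦ ψ(t,·)` from `[0,∞)` into the metric space `(𝒦^α, ‖·‖_α)`. -/
def KContinuous (α : ℝ) (ψ : ℝ → E3 → ℂ) : Prop :=
  ∀ t₀ ∈ Set.Ici (0:ℝ), Tendsto (fun t => Kdist α (ψ t) (ψ t₀)) (𝓝[Set.Ici (0:ℝ)] t₀) (𝓝 0)

/-- The angular singularity assumption `b(cos θ) θ^{2+2s} → K` as `θ → 0+`. -/
def KernelSingular (b : ℝ → ℝ) (s K : ℝ) : Prop :=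
  Tendsto (fun θ : ℝ => b (Real.cos θ) * θ ^ (2 + 2*s)) (𝓝[>] 0) (𝓝 K)

lemma exists_pos_pairs (F₀ : Measure E3) [IsProbabilityMeasure F₀]
    (haxis : F₀ {v : E3 | v 0 = 0 ∧ v 1 = 0} = 1)
    (hnotdirac : ∀ u : E3, F₀ {u} ≠ 1) :
    ∃ n : ℕ, 0 < (F₀.prod F₀) {z : E3 × E3 | (z.1 0 = 0 ∧ z.1 1 = 0) ∧ (z.2 0 = 0 ∧ z.2 1 = 0) ∧
      1 / ((n:ℝ) + 1) ≤ |z.1 2 - z.2 2| ∧ |z.1 2 - z.2 2| ≤ n} := by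
  by_contra! hcon
  have hL : MeasurableSet {v : E3 | v 0 = 0 ∧ v 1 = 0} := by
    apply IsClosed.measurableSet
    exact (isClosed_eq (by fun_prop) (by fun_prop)).inter (isClosed_eq (by fun_prop) (by fun_prop))
  have hae : ∀ᵐ v ∂F₀, v 0 = 0 ∧ v 1 = 0 := by
    rw [ae_iff]
    exact (prob_compl_eq_zero_iff hL).2 haxis
  have h1 : ∀ᵐ z ∂(F₀.prod F₀), z.1 0 = 0 ∧ z.1 1 = 0 :=
    Measure.quasiMeasurePreserving_fst.ae hae
  have h2 : ∀ᵐ z ∂(F₀.prod F₀), z.2 0 = 0 ∧ z.2 1 = 0 :=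
    Measure.quasiMeasurePreserving_snd.ae hae
  have h3 : ∀ᵐ z ∂(F₀.prod F₀), ∀ n : ℕ, ¬ ((z.1 0 = 0 ∧ z.1 1 = 0) ∧ (z.2 0 = 0 ∧ z.2 1 = 0) ∧
      1 / ((n:ℝ) + 1) ≤ |z.1 2 - z.2 2| ∧ |z.1 2 - z.2 2| ≤ (n:ℝ)) := by
    rw [ae_all_iff]
    intro n
    rw [ae_iff]
    simp only [not_not]
    exact le_antisymm (hcon n) bot_le
  have h4 : ∀ᵐ z ∂(F₀.prod F₀), z.1 = z.2 := by
    filter_upwards [h1, h2, h3] with z hz1 hz2 hz3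
    by_contra hne
    have hd : z.1 2 - z.2 2 ≠ 0 := by
      intro h0
      apply hne
      ext i
      fin_cases i
      · simp [hz1.1, hz2.1]
      · simp [hz1.2, hz2.2]
      · simpa using sub_eq_zero.1 h0
    have hpos : 0 < |z.1 2 - z.2 2| := abs_pos.2 hd
    obtain ⟨n1, hn1⟩ := exists_nat_one_div_lt hpos
    obtain ⟨n2, hn2⟩ := exists_nat_ge |z.1 2 - z.2 2|
    refine hz3 (max n1 n2) ⟨hz1, hz2, ?_, hn2.trans (by exact_mod_cast le_max_right _ _)⟩
    refine le_trans ?_ hn1.le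
    apply one_div_le_one_div_of_le (by positivity)
    have : (n1:ℝ) ≤ ((max n1 n2 : ℕ) : ℝ) := by exact_mod_cast le_max_left _ _
    linarith
  have h5 := Measure.ae_ae_of_ae_prod h4
  obtain ⟨v, hv⟩ := h5.exists
  apply hnotdirac v
  rw [← prob_compl_eq_zero_iff (measurableSet_singleton v)]
  rw [ae_iff] at hv
  convert hv using 2
  ext w
  simp [eq_comm]

lemma charFn_norm_sq (F₀ : Measure E3) [IsProbabilityMeasure F₀] (ζ : E3) :
    ‖charFn F₀ ζ‖ ^ 2 = ∫ z, Real.cos (⟪z.1, ζ⟫ - ⟪z.2, ζ⟫) ∂(F₀.prod F₀) := by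
  have h1 : (charFn F₀ ζ) * (starRingEnd ℂ) (charFn F₀ ζ) =
      ∫ z : E3 × E3, Complex.exp (-(Complex.I * (⟪z.1, ζ⟫ : ℂ))) *
        (starRingEnd ℂ) (Complex.exp (-(Complex.I * (⟪z.2, ζ⟫ : ℂ)))) ∂(F₀.prod F₀) := by
    rw [integral_prod_mul (L := ℂ) (fun v : E3 => Complex.exp (-(Complex.I * (⟪v, ζ⟫ : ℂ))))
      (fun v : E3 => (starRingEnd ℂ) (Complex.exp (-(Complex.I * (⟪v, ζ⟫ : ℂ))))), integral_conj]
    rfl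
  have h2 : ∀ z : E3 × E3, Complex.exp (-(Complex.I * (⟪z.1, ζ⟫ : ℂ))) *
        (starRingEnd ℂ) (Complex.exp (-(Complex.I * (⟪z.2, ζ⟫ : ℂ)))) =
        Complex.exp (((-(⟪z.1, ζ⟫ - ⟪z.2, ζ⟫) : ℝ) : ℂ) * Complex.I) := by
    intro z
    rw [← Complex.exp_conj, ← Complex.exp_add]
    congr 1
    simp
    ring
  simp_rw [h2] at h1
  rw [Complex.mul_conj, Complex.normSq_eq_norm_sq] at h1
  have hint : Integrable (fun z : E3 × E3 =>
      Complex.exp (((-(⟪z.1, ζ⟫ - ⟪z.2, ζ⟫) : ℝ) : ℂ) * Complex.I)) (F₀.prod F₀) := by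
    refine (integrable_const (1:ℝ)).mono' ?_ ?_
    · apply Continuous.aestronglyMeasurable
      fun_prop
    · filter_upwards with z
      rw [Complex.norm_exp_ofReal_mul_I]
  have h3 := congrArg Complex.re h1
  rw [Complex.ofReal_re] at h3
  rw [h3]
  have := integral_re hint
  simp only [RCLike.re_eq_complex_re] at this
  rw [← this]
  congr 1
  ext z
  rw [Complex.exp_ofReal_mul_I_re, Real.cos_neg]

lemma charFn_norm_le_one (F₀ : Measure E3) [IsProbabilityMeasure F₀] (ζ : E3) :
    ‖charFn F₀ ζ‖ ≤ 1 := by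
  unfold charFn
  refine (norm_integral_le_of_norm_le_const (C := 1) ?_).trans (by simp)
  filter_upwards with v
  rw [Complex.norm_exp]
  simp

lemma charFn_lower (F₀ : Measure E3) [IsProbabilityMeasure F₀]
    (haxis : F₀ {v : E3 | v 0 = 0 ∧ v 1 = 0} = 1)
    (hnotdirac : ∀ u : E3, F₀ {u} ≠ 1) :
    ∃ δ > (0:ℝ), ∃ c₀ > (0:ℝ), ∀ ζ : E3, |ζ 2| ≤ δ → c₀ * (ζ 2) ^ 2 ≤ 1 - ‖charFn F₀ ζ‖ := by
  obtain ⟨n, hn⟩ := exists_pos_pairs F₀ haxis hnotdirac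
  set S := {z : E3 × E3 | (z.1 0 = 0 ∧ z.1 1 = 0) ∧ (z.2 0 = 0 ∧ z.2 1 = 0) ∧
      1 / ((n:ℝ) + 1) ≤ |z.1 2 - z.2 2| ∧ |z.1 2 - z.2 2| ≤ n} with hS
  have hSm : MeasurableSet S := by
    apply IsClosed.measurableSet
    refine IsClosed.inter ?_ (IsClosed.inter ?_ (IsClosed.inter ?_ ?_))
    · exact (isClosed_eq (f := fun z : E3 × E3 => z.1 0) (g := fun _ => 0)
        (by fun_prop) (by fun_prop)).inter (isClosed_eq (f := fun z : E3 × E3 => z.1 1)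
        (g := fun _ => 0) (by fun_prop) (by fun_prop))
    · exact (isClosed_eq (f := fun z : E3 × E3 => z.2 0) (g := fun _ => 0)
        (by fun_prop) (by fun_prop)).inter (isClosed_eq (f := fun z : E3 × E3 => z.2 1)
        (g := fun _ => 0) (by fun_prop) (by fun_prop))
    · exact isClosed_le (f := fun _ : E3 × E3 => 1 / ((n:ℝ) + 1))
        (g := fun z : E3 × E3 => |z.1 2 - z.2 2|) (by fun_prop) (by fun_prop)
    · exact isClosed_le (f := fun z : E3 × E3 => |z.1 2 - z.2 2|)
        (g := fun _ : E3 × E3 => (n:ℝ)) (by fun_prop) (by fun_prop)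
  set q := (F₀.prod F₀).real S with hq
  have hqpos : 0 < q := ENNReal.toReal_pos hn.ne' (measure_ne_top _ _)
  refine ⟨1 / ((n:ℝ) + 1), by positivity, q * (1 / ((n:ℝ) + 1)) ^ 2 / π ^ 2,
    by have := Real.pi_pos; positivity, ?_⟩
  intro ζ hζ
  have h1 := charFn_norm_sq F₀ ζ
  have h0 := charFn_norm_le_one F₀ ζ
  set N := ‖charFn F₀ ζ‖ with hN
  have hN0 : 0 ≤ N := norm_nonneg _
  have hcint : Integrable (fun z : E3 × E3 => Real.cos (⟪z.1, ζ⟫ - ⟪z.2, ζ⟫)) (F₀.prod F₀) := by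
    refine (integrable_const (1:ℝ)).mono' ?_ ?_
    · apply Continuous.aestronglyMeasurable
      fun_prop
    · filter_upwards with z
      rw [Real.norm_eq_abs]
      exact Real.abs_cos_le_one _
  have h2 : 1 - N ^ 2 = ∫ z, (1 - Real.cos (⟪z.1, ζ⟫ - ⟪z.2, ζ⟫)) ∂(F₀.prod F₀) := by
    rw [integral_sub (integrable_const _) hcint, ← h1]
    simp
  have h3 : q * (2 / π ^ 2 * ((1 / ((n:ℝ) + 1)) ^ 2 * (ζ 2) ^ 2)) ≤ 1 - N ^ 2 := by
    rw [h2]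
    have hconst : ∫ z, S.indicator (fun _ => 2 / π ^ 2 * ((1 / ((n:ℝ) + 1)) ^ 2 * (ζ 2) ^ 2)) z
        ∂(F₀.prod F₀) = q * (2 / π ^ 2 * ((1 / ((n:ℝ) + 1)) ^ 2 * (ζ 2) ^ 2)) := by
      rw [integral_indicator_const _ hSm, smul_eq_mul]
    rw [← hconst]
    apply integral_mono
    · exact (integrable_const _).indicator hSm
    · exact (integrable_const _).sub hcint
    · intro z
      by_cases hz : z ∈ S
      · rw [indicator_of_mem hz]
        obtain ⟨⟨a0, a1⟩, ⟨b0, b1⟩, hz1, hz2⟩ := hz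
        have he : (⟪z.1, ζ⟫ - ⟪z.2, ζ⟫ : ℝ) = (z.1 2 - z.2 2) * ζ 2 := by
          simp only [PiLp.inner_apply, Fin.sum_univ_three, a0, a1, b0, b1]
          simp
          ring
        have hab : |(z.1 2 - z.2 2) * ζ 2| ≤ 1 := by
          rw [abs_mul]
          calc _ ≤ (n:ℝ) * (1 / ((n:ℝ) + 1)) := by gcongr
            _ ≤ 1 := by
              rw [mul_one_div, div_le_one (by positivity)]
              linarith
        have hc := Real.cos_le_one_sub_mul_cos_sq (x := (z.1 2 - z.2 2) * ζ 2)
          (hab.trans (by linarith [Real.pi_gt_three]))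
        have hsq : (1 / ((n:ℝ) + 1)) ^ 2 * (ζ 2) ^ 2 ≤ ((z.1 2 - z.2 2) * ζ 2) ^ 2 := by
          rw [mul_pow, ← sq_abs (z.1 2 - z.2 2)]
          gcongr
        have : 2 / π ^ 2 * ((1 / ((n:ℝ) + 1)) ^ 2 * (ζ 2) ^ 2) ≤
            2 / π ^ 2 * ((z.1 2 - z.2 2) * ζ 2) ^ 2 := by gcongr
        simp only [he]
        linarith
      · rw [indicator_of_notMem hz]
        have := Real.cos_le_one (⟪z.1, ζ⟫ - ⟪z.2, ζ⟫)
        simp only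
        linarith
  have h4 : 1 - N ^ 2 ≤ 2 * (1 - N) := by nlinarith
  have h5 : q * (1 / ((n:ℝ) + 1)) ^ 2 / π ^ 2 * (ζ 2) ^ 2 * 2 =
    q * (2 / π ^ 2 * ((1 / ((n:ℝ) + 1)) ^ 2 * (ζ 2) ^ 2)) := by ring
  linarith

open scoped Pointwise in
lemma cap_measure (ω η : E3) (hω : ‖ω‖ = 1) (hη : ‖η‖ = 1) (hωη : ⟪ω, η⟫ = 0)
    (τ : ℝ) (hτ : 0 < τ) (hτ1 : τ ≤ 1/4) (A : Set (sphere (0:E3) 1)) (hAm : MeasurableSet A)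
    (hA : ∀ (σ : sphere (0:E3) 1) (u : E3) (l : ℝ), ‖u‖ ≤ 1/2 → 0 < l → l ≤ 3/2 →
      l • (σ : E3) = ω + τ • η + τ • u → σ ∈ A) :
    ENNReal.ofReal (τ ^ 2 / 1024) * volume (ball (0:E3) 1) ≤ sphμ A := by
  set v₀ : E3 := ω + τ • η with hv₀
  have hv₀norm : 1 ≤ ‖v₀‖ := by
    have : ⟪ω, v₀⟫ = (1:ℝ) := by
      rw [hv₀, inner_add_right, inner_smul_right, hωη, real_inner_self_eq_norm_sq, hω]; norm_num
    have h := real_inner_le_norm ω v₀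
    rw [this, hω, one_mul] at h
    exact h
  set N := ⌊1/τ⌋₊ with hN
  have hNle : (N:ℝ) * τ ≤ 1 := by
    have := Nat.floor_le (a := 1/τ) (by positivity)
    rwa [le_div_iff₀ hτ] at this
  have hNge : 1/2 ≤ (N:ℝ) * τ := by
    have := Nat.lt_floor_add_one (1/τ)
    rw [div_lt_iff₀ hτ] at this
    change 1 < ((N:ℝ) + 1) * τ at this
    nlinarith
  let t : ℕ → ℝ := fun k => 1/4 + k * τ / 4
  have hsub : (⋃ k ∈ Finset.range N, ball (t k • v₀) (τ/8)) ⊆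
      Ioo (0:ℝ) 1 • ((↑) '' A : Set E3) := by
    intro x hx
    simp only [mem_iUnion, Finset.mem_range, exists_prop] at hx
    obtain ⟨k, hk, hx⟩ := hx
    rw [mem_ball, dist_eq_norm] at hx
    have ht1 : 1/4 ≤ t k := by simp only [t]; linarith [show 0 ≤ (k:ℝ) * τ / 4 by positivity]
    have ht2 : t k ≤ 1/2 := by
      have : (k:ℝ) * τ ≤ N * τ := by gcongr
      simp only [t]; linarith
    generalize t k = T at *
    have hT : 0 < T := by linarith
    set y : E3 := T⁻¹ • x with hy
    set u : E3 := τ⁻¹ • (y - v₀) with hu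
    have hyu : y = v₀ + τ • u := by
      rw [hu, smul_smul, mul_inv_cancel₀ hτ.ne', one_smul]; abel
    have hun : ‖u‖ ≤ 1/2 := by
      have : y - v₀ = T⁻¹ • (x - T • v₀) := by
        rw [smul_sub, smul_smul, inv_mul_cancel₀ hT.ne', one_smul]
      rw [hu, this, smul_smul, norm_smul, Real.norm_eq_abs, abs_of_pos (by positivity)]
      calc τ⁻¹ * T⁻¹ * ‖x - T • v₀‖ ≤ τ⁻¹ * (1/4)⁻¹ * (τ/8) := by gcongr
        _ = 1/2 := by field_simp; norm_num
    have hyω : ‖y - ω‖ ≤ 3/8 := by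
      have : y - ω = τ • η + τ • u := by rw [hyu, hv₀]; abel
      rw [this]
      refine (norm_add_le _ _).trans ?_
      rw [norm_smul, norm_smul, hη, Real.norm_eq_abs, abs_of_pos hτ]
      nlinarith
    have hy1 : ‖y‖ ≤ 11/8 := by
      have := norm_le_norm_add_norm_sub' y ω
      linarith
    have hy2 : 5/8 ≤ ‖y‖ := by
      have := norm_le_norm_add_norm_sub' ω y
      rw [norm_sub_rev] at this
      linarith
    have hyp : 0 < ‖y‖ := by linarith
    have hσ : ‖y‖⁻¹ • y ∈ sphere (0:E3) 1 := by
      rw [mem_sphere_zero_iff_norm, norm_smul, norm_inv, norm_norm, inv_mul_cancel₀ hyp.ne']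
    have hly : ‖y‖ • (‖y‖⁻¹ • y) = y := by rw [smul_smul, mul_inv_cancel₀ hyp.ne', one_smul]
    have hmem : (⟨‖y‖⁻¹ • y, hσ⟩ : sphere (0:E3) 1) ∈ A := by
      refine hA _ u ‖y‖ hun hyp (by linarith) ?_
      simp only
      rw [hly, hyu]
    refine Set.mem_smul.2 ⟨T * ‖y‖, ⟨by positivity, by nlinarith⟩, _, ⟨_, hmem, rfl⟩, ?_⟩
    simp only
    rw [mul_smul, hly, hy, smul_smul, mul_inv_cancel₀ hT.ne', one_smul]
  have hdisj : ((Finset.range N : Finset ℕ) : Set ℕ).PairwiseDisjoint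
      (fun k => ball (t k • v₀) (τ/8)) := by
    intro i _ j _ hij
    apply Metric.ball_disjoint_ball
    rw [dist_eq_norm, ← sub_smul, norm_smul, Real.norm_eq_abs]
    have h1 : t i - t j = ((i:ℝ) - j) * (τ/4) := by simp only [t]; ring
    have h2 : (1:ℝ) ≤ |(i:ℝ) - j| := by
      have : (1:ℤ) ≤ |(i:ℤ) - j| := Int.one_le_abs (by omega)
      exact_mod_cast this
    rw [h1, abs_mul, abs_of_pos (by positivity : 0 < τ/4)]
    calc τ/8 + τ/8 = 1 * (τ/4) * 1 := by ring
      _ ≤ _ := by gcongr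
  have hmeas := measure_biUnion_finset (μ := (volume : Measure E3)) hdisj
    (fun k _ => measurableSet_ball)
  have hball : ∀ k, volume (ball (t k • v₀) (τ/8)) =
      ENNReal.ofReal ((τ/8)^3) * volume (ball (0:E3) 1) := by
    intro k
    rw [Measure.addHaar_ball_of_pos _ _ (by positivity)]
    simp
  simp only [hball, Finset.sum_const, Finset.card_range, nsmul_eq_mul] at hmeas
  have hle := measure_mono (μ := (volume : Measure E3)) hsub
  rw [hmeas] at hle
  unfold sphμ
  rw [Measure.toSphere_apply' _ hAm]
  calc ENNReal.ofReal (τ ^ 2 / 1024) * volume (ball (0:E3) 1)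
      ≤ (N:ENNReal) * (ENNReal.ofReal ((τ/8)^3) * volume (ball (0:E3) 1)) := by
        rw [← mul_assoc]
        gcongr
        rw [← ENNReal.ofReal_natCast, ← ENNReal.ofReal_mul (by positivity)]
        apply ENNReal.ofReal_le_ofReal
        have : (N:ℝ) * (τ/8)^3 = (N * τ) * (τ^2/512) := by ring
        rw [this]
        nlinarith [sq_nonneg τ]
    _ ≤ 1 * volume (Ioo (0:ℝ) 1 • ((↑) '' A : Set E3)) := by rw [one_mul]; exact hle
    _ ≤ _ := by
        gcongr
        simp

lemma exists_frame (ξ : E3) (hξ : ξ ≠ 0) :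
    ∃ (p η : E3) (κ : ℝ), ‖η‖ = 1 ∧ ⟪‖ξ‖⁻¹ • ξ, η⟫ = (0:ℝ) ∧ ⟪‖ξ‖⁻¹ • ξ, p⟫ = (0:ℝ) ∧
      κ ^ 2 = 1 ∧ κ * ξ 2 = |ξ 2| ∧ κ * ⟪η, p⟫ = -‖p‖ ∧ ‖p‖ ^ 2 = (ξ 0) ^ 2 + (ξ 1) ^ 2 ∧
      ∀ σ : E3, ‖ξ‖ * σ 2 = ⟪σ, p⟫ + ξ 2 * ⟪‖ξ‖⁻¹ • ξ, σ⟫ := by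
  have hr : 0 < ‖ξ‖ := norm_pos_iff.2 hξ
  have hr2 : ‖ξ‖ ^ 2 = (ξ 0) ^ 2 + (ξ 1) ^ 2 + (ξ 2) ^ 2 := by
    rw [EuclideanSpace.real_norm_sq_eq, Fin.sum_univ_three]
  set r := ‖ξ‖ with hrdef
  let e : E3 := EuclideanSpace.single 2 1
  have he : ∀ x : E3, ⟪x, e⟫ = x 2 := by
    intro x
    simp [e, EuclideanSpace.inner_single_right]
  have hee : ⟪e, e⟫ = (1:ℝ) := by rw [he]; simp [e]
  set p : E3 := r • e - (ξ 2 * r⁻¹) • ξ with hp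
  have hxx : ⟪ξ, ξ⟫ = r ^ 2 := real_inner_self_eq_norm_sq ξ
  have hip : ∀ x : E3, ⟪x, p⟫ = r * x 2 - ξ 2 * r⁻¹ * ⟪x, ξ⟫ := by
    intro x
    rw [hp, inner_sub_right, inner_smul_right, inner_smul_right, he]
  have hξp : ⟪ξ, p⟫ = (0:ℝ) := by
    rw [hip, hxx]; field_simp; ring
  have hpp : ‖p‖ ^ 2 = (ξ 0) ^ 2 + (ξ 1) ^ 2 := by
    rw [← real_inner_self_eq_norm_sq, hip, real_inner_comm, hξp]
    have : p 2 = r - ξ 2 * r⁻¹ * ξ 2 := by simp [hp, e]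
    rw [this]
    field_simp
    linear_combination r * hr2
  obtain ⟨κ, hκ1, hκ2⟩ : ∃ κ : ℝ, κ ^ 2 = 1 ∧ κ * ξ 2 = |ξ 2| := by
    rcases le_total 0 (ξ 2) with h | h
    · exact ⟨1, by norm_num, by rw [abs_of_nonneg h, one_mul]⟩
    · exact ⟨-1, by norm_num, by rw [abs_of_nonpos h]; ring⟩
  obtain ⟨η, hη1, hη2, hη3⟩ : ∃ η : E3, ‖η‖ = 1 ∧ ⟪ξ, η⟫ = (0:ℝ) ∧ κ * ⟪η, p⟫ = -‖p‖ := by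
    by_cases hp0 : p = 0
    · refine ⟨EuclideanSpace.single 0 1, by simp, ?_, by simp [hp0]⟩
      rw [hp0] at hpp
      have : ξ 0 = 0 := by
        simp at hpp
        nlinarith [sq_nonneg (ξ 0), sq_nonneg (ξ 1)]
      simp [EuclideanSpace.inner_single_right, this]
    · have hpn : 0 < ‖p‖ := norm_pos_iff.2 hp0
      refine ⟨(-κ * ‖p‖⁻¹) • p, ?_, ?_, ?_⟩
      · rw [norm_smul, Real.norm_eq_abs, abs_mul, abs_neg, (by rw [← sq_abs] at hκ1; exact (pow_eq_one_iff_of_nonneg (abs_nonneg _) two_ne_zero).1 hκ1 : |κ| = 1),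
          abs_of_pos (by positivity)]
        field_simp
      · rw [inner_smul_right, hξp, mul_zero]
      · rw [real_inner_smul_left, real_inner_self_eq_norm_sq]
        field_simp
        linear_combination (-1) * hκ1
  refine ⟨p, η, κ, hη1, ?_, ?_, hκ1, hκ2, hη3, hpp, ?_⟩
  · rw [real_inner_smul_left, hη2, mul_zero]
  · rw [real_inner_smul_left, hξp, mul_zero]
  · intro σ
    rw [hip, real_inner_smul_left, real_inner_comm ξ σ]
    ring

lemma cone_point (ω η p σ u : E3) (hω : ‖ω‖ = 1) (hη : ‖η‖ = 1) (hσ : ‖σ‖ = 1)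
    (hωη : ⟪ω, η⟫ = 0) (hωp : ⟪ω, p⟫ = 0) (κ : ℝ) (hκ : |κ| = 1)
    (hηp : κ * ⟪η, p⟫ = -‖p‖) (τ l : ℝ) (hτ : 0 < τ) (hu : ‖u‖ ≤ 1/2)
    (hl : 0 < l) (hl1 : l ≤ 3/2) (h : l • σ = ω + τ • η + τ • u) :
    τ / 3 ≤ ‖σ - ω‖ ∧ ‖σ - ω‖ ≤ 3 * τ ∧ κ * ⟪σ, p⟫ ≤ - (τ * ‖p‖ / 3) := by
  refine ⟨?_, ?_, ?_⟩
  · have h1 := congrArg (fun x => ⟪x, η⟫) h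
    simp only [inner_add_left, real_inner_smul_left, hωη, real_inner_self_eq_norm_sq, hη] at h1
    have h2 : -(1/2) ≤ ⟪u, η⟫ := by
      have := abs_real_inner_le_norm u η
      rw [hη] at this
      linarith [neg_abs_le ⟪u, η⟫]
    have h3 : ⟪σ - ω, η⟫ ≤ ‖σ - ω‖ := by
      have := real_inner_le_norm (σ - ω) η
      rwa [hη, mul_one] at this
    rw [inner_sub_left, hωη, sub_zero] at h3
    have h4 : τ / 2 ≤ l * ⟪σ, η⟫ := by rw [h1]; nlinarith
    have h5 : 0 < ⟪σ, η⟫ := by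
      by_contra! hc
      nlinarith
    nlinarith
  · have h1 : ‖l • σ - ω‖ ≤ 3/2 * τ := by
      have : l • σ - ω = τ • η + τ • u := by rw [h]; abel
      rw [this]
      refine (norm_add_le _ _).trans ?_
      rw [norm_smul, norm_smul, hη, Real.norm_eq_abs, abs_of_pos hτ]
      nlinarith
    have h2 : ‖σ - l • σ‖ ≤ 3/2 * τ := by
      have e1 : σ - l • σ = (1 - l) • σ := by rw [sub_smul, one_smul]
      have e2 := abs_norm_sub_norm_le (l • σ) ω
      rw [norm_smul, hσ, hω, Real.norm_eq_abs, abs_of_pos hl, mul_one] at e2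
      rw [e1, norm_smul, hσ, Real.norm_eq_abs, mul_one, abs_sub_comm]
      exact e2.trans h1
    have := norm_sub_le_norm_sub_add_norm_sub σ (l • σ) ω
    linarith
  · have h1 := congrArg (fun x => κ * ⟪x, p⟫) h
    simp only [inner_add_left, real_inner_smul_left, hωp] at h1
    have h2 : κ * ⟪u, p⟫ ≤ 1/2 * ‖p‖ := by
      calc κ * ⟪u, p⟫ ≤ |κ * ⟪u, p⟫| := le_abs_self _
        _ = |⟪u, p⟫| := by rw [abs_mul, hκ, one_mul]
        _ ≤ ‖u‖ * ‖p‖ := abs_real_inner_le_norm u p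
        _ ≤ _ := by gcongr
    have h3 : l * (κ * ⟪σ, p⟫) ≤ -(τ * ‖p‖ / 2) := by
      have : l * (κ * ⟪σ, p⟫) = τ * (κ * ⟪η, p⟫) + τ * (κ * ⟪u, p⟫) := by linarith
      rw [this, hηp]
      nlinarith
    have hp : 0 ≤ τ * ‖p‖ := by positivity
    by_contra! hc
    nlinarith

lemma kernel_lower (b : ℝ → ℝ) (s K : ℝ) (hs0 : 0 < s) (hK : 0 < K)
    (hb_sing : KernelSingular b s K) :
    ∃ θ₀ > (0:ℝ), ∀ x d : ℝ, 0 < d → 5 * d < θ₀ → d ≤ 1 → 1 - (3 * d) ^ 2 / 2 ≤ x → x < 1 → -1 ≤ x →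
      K / 2 / (5 * d) ^ (2 + 2 * s) ≤ b x := by
  have h1 : ∀ᶠ θ in 𝓝[>] (0:ℝ), K / 2 < b (Real.cos θ) * θ ^ (2 + 2*s) :=
    hb_sing.eventually (lt_mem_nhds (by linarith))
  rw [eventually_nhdsWithin_iff, Metric.eventually_nhds_iff] at h1
  obtain ⟨θ₀, hθ₀, h1⟩ := h1
  refine ⟨θ₀, hθ₀, ?_⟩
  intro x d hd hd1 hd2 hx1 hx2 hx3
  have hcos : Real.cos (Real.arccos x) = x := Real.cos_arccos hx3 hx2.le
  have hpos : 0 < Real.arccos x := Real.arccos_pos.2 hx2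
  have hpi : Real.arccos x ≤ π := Real.arccos_le_pi x
  set θ := Real.arccos x with hθ
  have hq := Real.cos_le_one_sub_mul_cos_sq (x := θ) (by rw [abs_of_pos hpos]; exact hpi)
  rw [hcos] at hq
  have hle : θ ≤ 5 * d := by
    have hπ := Real.pi_pos
    have hπ2 := Real.pi_lt_d2
    have e1 : 2 / π ^ 2 * θ ^ 2 ≤ (3 * d) ^ 2 / 2 := by linarith
    rw [div_mul_eq_mul_div, div_le_iff₀ (by positivity)] at e1
    have e2 : θ ^ 2 ≤ (3 * d * π / 2) ^ 2 := by nlinarith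
    have e3 := (le_abs_self θ).trans (abs_le_of_sq_le_sq e2 (by positivity))
    nlinarith
  have hb := h1 (y := θ) (by rw [Real.dist_eq, sub_zero, abs_of_pos hpos]; linarith) hpos
  rw [hcos] at hb
  have hθp : 0 < θ ^ (2 + 2 * s) := Real.rpow_pos_of_pos hpos _
  have hle2 : θ ^ (2 + 2 * s) ≤ (5 * d) ^ (2 + 2 * s) :=
    Real.rpow_le_rpow hpos.le hle (by linarith)
  calc K / 2 / (5 * d) ^ (2 + 2 * s) ≤ K / 2 / θ ^ (2 + 2 * s) := by gcongr
    _ ≤ b x := by rw [div_le_iff₀ hθp]; exact hb.le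

set_option maxHeartbeats 1000000 in
lemma pointwise_lower
    (s K : ℝ) (hs0 : 0 < s) (hK : 0 < K)
    (b : ℝ → ℝ) (hb_nonneg : ∀ x, 0 ≤ b x)
    (hb_sing : KernelSingular b s K)
    (F₀ : Measure E3) [IsProbabilityMeasure F₀]
    (haxis : F₀ {v : E3 | v 0 = 0 ∧ v 1 = 0} = 1)
    (hnotdirac : ∀ u : E3, F₀ {u} ≠ 1) :
    ∃ R > (0:ℝ), ∃ c > (0:ℝ), ∀ ξ : E3, R ≤ ‖ξ‖ →
      ENNReal.ofReal (c * ((ξ 0) ^ 2 + (ξ 1) ^ 2 + |ξ 2|) ^ s) ≤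
        ∫⁻ σ, ENNReal.ofReal
              (b (⟪ξ, (σ : E3)⟫ / ‖ξ‖) * (1 - ‖charFn F₀ (xiMinus ξ σ)‖)) ∂sphμ := by
  obtain ⟨δ, hδ, c₀, hc₀, hchar⟩ := charFn_lower F₀ haxis hnotdirac
  obtain ⟨θ₀, hθ₀, hker⟩ := kernel_lower b s K hs0 hK hb_sing
  obtain ⟨a, ha, ha1, haδ⟩ : ∃ a : ℝ, 0 < a ∧ a ≤ 1 ∧ 4 * a ≤ δ :=
    ⟨min 1 (δ/4), by positivity, min_le_left _ _, by linarith [min_le_right 1 (δ/4)]⟩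
  set v := (volume (ball (0:E3) 1)).toReal with hv
  have hvtop : volume (ball (0:E3) 1) ≠ ⊤ := measure_ball_lt_top.ne
  have hvpos : 0 < v := ENNReal.toReal_pos (measure_ball_pos _ _ one_pos).ne' hvtop
  set m := c₀ * (a ^ 2 / 36) ^ 2 with hm
  have hmpos : 0 < m := by positivity
  have h5 : 0 < (5:ℝ) ^ (2 + 2 * s) := by positivity
  refine ⟨1 + (4 * a) ^ 2 + (6 * a / θ₀) ^ 2, by positivity,
    K / 2 / 5 ^ (2 + 2 * s) * m / 1024 * v, by positivity, ?_⟩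
  intro ξ hR
  have hr1 : 1 ≤ ‖ξ‖ := by nlinarith [sq_nonneg (4 * a), sq_nonneg (6 * a / θ₀)]
  have hξ : ξ ≠ 0 := by
    rintro rfl
    simp at hr1
    linarith
  have hr : 0 < ‖ξ‖ := by linarith
  have hr2 : ‖ξ‖ ^ 2 = (ξ 0) ^ 2 + (ξ 1) ^ 2 + (ξ 2) ^ 2 := by
    rw [EuclideanSpace.real_norm_sq_eq, Fin.sum_univ_three]
  set Q := (ξ 0) ^ 2 + (ξ 1) ^ 2 + |ξ 2| with hQ
  have hQr : ‖ξ‖ ≤ Q := by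
    have h2 : |ξ 2| ≤ ‖ξ‖ := by
      have := PiLp.norm_apply_le ξ 2
      rwa [Real.norm_eq_abs] at this
    have : Q - ‖ξ‖ = (‖ξ‖ - |ξ 2|) * (‖ξ‖ + |ξ 2| - 1) := by
      have := sq_abs (ξ 2)
      rw [hQ]
      linear_combination this + (-1) * hr2
    have h3 : 0 ≤ (‖ξ‖ - |ξ 2|) * (‖ξ‖ + |ξ 2| - 1) :=
      mul_nonneg (by linarith) (by linarith [abs_nonneg (ξ 2)])
    linarith
  have hQpos : 0 < Q := by linarith
  set Λ := Real.sqrt Q with hΛ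
  have hΛpos : 0 < Λ := Real.sqrt_pos.2 hQpos
  have hΛ2 : Λ ^ 2 = Q := Real.sq_sqrt hQpos.le
  have hΛ4 : 4 * a ≤ Λ := Real.le_sqrt_of_sq_le (by nlinarith [sq_nonneg (6 * a / θ₀)])
  have hΛθ : 6 * a / θ₀ ≤ Λ := Real.le_sqrt_of_sq_le (by nlinarith [sq_nonneg (4 * a)])
  set τ := a / Λ with hτdef
  have hτ : 0 < τ := by positivity
  have hτΛ : τ * Λ = a := by rw [hτdef]; field_simp
  have hτ4 : τ ≤ 1/4 := by rw [hτdef, div_le_iff₀ hΛpos]; linarith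
  have hτθ : 5 * τ < θ₀ := by
    rw [div_le_iff₀ hθ₀] at hΛθ
    have : 6 * (τ * Λ) ≤ Λ * θ₀ := by rw [hτΛ]; exact hΛθ
    have : 6 * τ ≤ θ₀ := by
      by_contra! hc
      nlinarith
    linarith
  have hτQ : τ ^ 2 * Q = a ^ 2 := by rw [← hΛ2, ← mul_pow, hτΛ]
  obtain ⟨p, η, κ, hη, hωη, hωp, hκ, hκξ, hηp, hpp, hid⟩ := exists_frame ξ hξ
  have hκ1 : |κ| = 1 := by
    rw [← sq_abs] at hκ
    exact (pow_eq_one_iff_of_nonneg (abs_nonneg _) two_ne_zero).1 hκ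
  set ω : E3 := ‖ξ‖⁻¹ • ξ with hω
  have hωn : ‖ω‖ = 1 := by rw [hω, norm_smul, norm_inv, norm_norm, inv_mul_cancel₀ hr.ne']
  set A : Set (sphere (0:E3) 1) := {σ | τ / 3 ≤ ‖(σ:E3) - ω‖ ∧ ‖(σ:E3) - ω‖ ≤ 3 * τ ∧
    κ * ⟪(σ:E3), p⟫ ≤ - (τ * ‖p‖ / 3)} with hA
  have hAm : MeasurableSet A := by
    apply IsClosed.measurableSet
    refine IsClosed.inter ?_ (IsClosed.inter ?_ ?_)
    · exact isClosed_le (f := fun _ => τ / 3)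
        (g := fun σ : sphere (0:E3) 1 => ‖(σ:E3) - ω‖) (by fun_prop) (by fun_prop)
    · exact isClosed_le (g := fun _ => 3 * τ)
        (f := fun σ : sphere (0:E3) 1 => ‖(σ:E3) - ω‖) (by fun_prop) (by fun_prop)
    · exact isClosed_le (g := fun _ => - (τ * ‖p‖ / 3))
        (f := fun σ : sphere (0:E3) 1 => κ * ⟪(σ:E3), p⟫) (by fun_prop) (by fun_prop)
  have hcap := cap_measure ω η hωn hη hωη τ hτ hτ4 A hAm (by
    intro σ u l hu hl hl1 h
    exact cone_point ω η p σ u hωn hη (by simp) hωη hωp κ hκ1 hηp τ l hτ hu hl hl1 h)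
  have hρ : 0 ≤ ‖p‖ := norm_nonneg p
  have hρΛ : ‖p‖ ≤ Λ := Real.le_sqrt_of_sq_le (by rw [hpp, hQ]; linarith [abs_nonneg (ξ 2)])
  have hξQ : |ξ 2| ≤ Q := by rw [hQ]; linarith [sq_nonneg (ξ 0), sq_nonneg (ξ 1)]
  have hτρ : τ * ‖p‖ ≤ a := by rw [← hτΛ]; gcongr
  have hτξ : τ ^ 2 * |ξ 2| ≤ a ^ 2 := by rw [← hτQ]; gcongr
  have hlow : ∀ σ ∈ A, K / 2 / (5 * τ) ^ (2 + 2 * s) * m ≤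
      b (⟪ξ, (σ : E3)⟫ / ‖ξ‖) * (1 - ‖charFn F₀ (xiMinus ξ σ)‖) := by
    rintro σ ⟨h1, h2, h3⟩
    have hσn : ‖(σ:E3)‖ = 1 := by simp
    have hx : ⟪ξ, (σ:E3)⟫ / ‖ξ‖ = ⟪ω, (σ:E3)⟫ := by
      rw [hω, real_inner_smul_left, div_eq_inv_mul]
    have hw : ‖(σ:E3) - ω‖ ^ 2 = 2 - 2 * ⟪ω, (σ:E3)⟫ := by
      rw [norm_sub_sq_real, hσn, hωn, real_inner_comm]; ring
    have hid' := hid σ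
    set W := ‖(σ:E3) - ω‖ with hW
    have hWpos : 0 < W := by linarith
    have hb : K / 2 / (5 * τ) ^ (2 + 2 * s) ≤ b (⟪ξ, (σ : E3)⟫ / ‖ξ‖) := by
      rw [hx]
      apply hker _ τ hτ hτθ (by linarith)
      · have := pow_le_pow_left₀ hWpos.le h2 2
        linarith
      · have := pow_pos hWpos 2
        linarith
      · have := neg_abs_le ⟪ω, (σ:E3)⟫
        have := abs_real_inner_le_norm ω (σ:E3)
        rw [hωn, hσn] at this
        linarith
    have hζ : 2 * (xiMinus ξ σ) 2 = ξ 2 - ‖ξ‖ * (σ:E3) 2 := by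
      simp [xiMinus]
      ring
    set z := (xiMinus ξ σ) 2 with hz
    have hκz : 2 * (κ * z) = -(κ * ⟪(σ:E3), p⟫) + |ξ 2| * W ^ 2 / 2 := by
      rw [hw, ← hκξ]
      linear_combination κ * hζ - κ * hid'
    have hσp : -(κ * ⟪(σ:E3), p⟫) ≤ 3 * (τ * ‖p‖) := by
      have e1 : ⟪(σ:E3), p⟫ = ⟪(σ:E3) - ω, p⟫ := by rw [inner_sub_left, hωp, sub_zero]
      calc -(κ * ⟪(σ:E3), p⟫) ≤ |κ * ⟪(σ:E3), p⟫| := neg_le_abs _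
        _ = |⟪(σ:E3), p⟫| := by rw [abs_mul, hκ1, one_mul]
        _ ≤ W * ‖p‖ := by rw [e1]; exact abs_real_inner_le_norm _ _
        _ ≤ 3 * τ * ‖p‖ := by gcongr
        _ = _ := by ring
    have hW1 : W ^ 2 ≤ 9 * τ ^ 2 := by
      have := pow_le_pow_left₀ hWpos.le h2 2
      linarith
    have hW2 : τ ^ 2 / 9 ≤ W ^ 2 := by
      have := pow_le_pow_left₀ (by positivity) h1 2
      linarith
    have hξ0 := abs_nonneg (ξ 2)
    have hup : κ * z ≤ 4 * a := by
      have := mul_le_mul_of_nonneg_left hW1 hξ0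
      have ha2 : a ^ 2 ≤ a := by rw [sq]; exact mul_le_of_le_one_left ha.le ha1
      linarith
    have hlo : a ^ 2 / 36 ≤ κ * z := by
      have e1 : τ ^ 2 * |ξ 2| / 9 ≤ |ξ 2| * W ^ 2 := by
        have := mul_le_mul_of_nonneg_left hW2 hξ0
        linarith
      have e2 : τ ^ 2 * ‖p‖ ^ 2 ≤ τ * ‖p‖ := by
        have : 0 ≤ τ * ‖p‖ := by positivity
        have := mul_le_of_le_one_left this (hτρ.trans ha1)
        linarith
      have e3 : τ ^ 2 * ‖p‖ ^ 2 + τ ^ 2 * |ξ 2| = a ^ 2 := by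
        rw [hpp, ← hτQ, hQ]; ring
      have e4 : 0 ≤ τ * ‖p‖ := by positivity
      linarith
    have habs : |z| = κ * z := by
      have : |κ * z| = |z| := by rw [abs_mul, hκ1, one_mul]
      rw [← this, abs_of_nonneg]
      exact le_trans (by positivity) hlo
    have hc := hchar (xiMinus ξ σ) (by rw [← hz, habs]; linarith)
    have hmle : m ≤ 1 - ‖charFn F₀ (xiMinus ξ σ)‖ := by
      refine le_trans ?_ hc
      rw [hm, ← hz, ← sq_abs z, habs]
      gcongr
    have := hb_nonneg (⟪ξ, (σ : E3)⟫ / ‖ξ‖)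
    gcongr
  calc ENNReal.ofReal (K / 2 / 5 ^ (2 + 2 * s) * m / 1024 * v * Q ^ s)
      ≤ ENNReal.ofReal (K / 2 / (5 * τ) ^ (2 + 2 * s) * m * (τ ^ 2 / 1024 * v)) := by
        apply ENNReal.ofReal_le_ofReal
        have e1 : (5 * τ) ^ (2 + 2 * s) = 5 ^ (2 + 2 * s) * (τ ^ 2 * (τ ^ 2) ^ s) := by
          rw [Real.mul_rpow (by norm_num) hτ.le, Real.rpow_add hτ, Real.rpow_mul hτ.le]
          norm_num
        have e2 : (τ ^ 2) ^ s * Q ^ s ≤ 1 := by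
          rw [← Real.mul_rpow (by positivity) hQpos.le, hτQ]
          exact Real.rpow_le_one (by positivity) (by nlinarith) hs0.le
        have e3 : 0 < (τ ^ 2) ^ s := by positivity
        have e4 : Q ^ s ≤ 1 / (τ ^ 2) ^ s := by rw [le_div_iff₀ e3]; linarith
        calc K / 2 / 5 ^ (2 + 2 * s) * m / 1024 * v * Q ^ s
            ≤ K / 2 / 5 ^ (2 + 2 * s) * m / 1024 * v * (1 / (τ ^ 2) ^ s) := by gcongr
          _ = _ := by
            rw [e1]
            generalize (τ ^ 2) ^ s = y at *
            field_simp
    _ = ENNReal.ofReal (K / 2 / (5 * τ) ^ (2 + 2 * s) * m) *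
          (ENNReal.ofReal (τ ^ 2 / 1024) * volume (ball (0:E3) 1)) := by
        rw [ENNReal.ofReal_mul (by positivity), ENNReal.ofReal_mul (p := τ ^ 2 / 1024) (by positivity), hv,
          ENNReal.ofReal_toReal hvtop]
    _ ≤ ENNReal.ofReal (K / 2 / (5 * τ) ^ (2 + 2 * s) * m) * sphμ A := by gcongr
    _ = ∫⁻ _ in A, ENNReal.ofReal (K / 2 / (5 * τ) ^ (2 + 2 * s) * m) ∂sphμ := by
        rw [setLIntegral_const]
    _ ≤ ∫⁻ σ in A, ENNReal.ofReal
              (b (⟪ξ, (σ : E3)⟫ / ‖ξ‖) * (1 - ‖charFn F₀ (xiMinus ξ σ)‖)) ∂sphμ :=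
        setLIntegral_mono' hAm (fun σ hσ => ENNReal.ofReal_le_ofReal (hlow σ hσ))
    _ ≤ _ := setLIntegral_le_lintegral _ _

/-- anisotropic degenerate coercivity for the initial
characteristic function of a measure concentrated on the third coordinate axis. -/
theorem anisotropic_degenerate_coercivity
    (s K : ℝ) (hs0 : 0 < s) (hs1 : s < 1) (hK : 0 < K)
    (b : ℝ → ℝ) (hb_meas : Measurable b) (hb_nonneg : ∀ x, 0 ≤ b x)
    (hb_sing : KernelSingular b s K)
    (F₀ : Measure E3) [IsProbabilityMeasure F₀]
    (haxis : F₀ {v : E3 | v 0 = 0 ∧ v 1 = 0} = 1)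
    (hnotdirac : ∀ u : E3, F₀ {u} ≠ 1) :
    ∃ R > (0:ℝ), ∃ c > (0:ℝ), ∀ h : E3 → ℂ, Measurable h →
      (∫⁻ ξ : E3, ENNReal.ofReal ((1 + ‖ξ‖ ^ 2) ^ s * ‖h ξ‖ ^ 2)) < ⊤ →
      ENNReal.ofReal c *
          (∫⁻ ξ : E3 in {ξ : E3 | R ≤ ‖ξ‖},
            ENNReal.ofReal (((ξ 0) ^ 2 + (ξ 1) ^ 2 + |ξ 2|) ^ s * ‖h ξ‖ ^ 2)) ≤
        ∫⁻ ξ : E3,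
          (∫⁻ σ, ENNReal.ofReal
              (b (⟪ξ, (σ : E3)⟫ / ‖ξ‖) * (1 - ‖charFn F₀ (xiMinus ξ σ)‖)) ∂sphμ)
            * ENNReal.ofReal (‖h ξ‖ ^ 2) := by
  obtain ⟨R, hR, c, hc, hpt⟩ := pointwise_lower s K hs0 hK b hb_nonneg hb_sing F₀ haxis hnotdirac
  refine ⟨R, hR, c, hc, ?_⟩
  intro h _ _
  have hS : MeasurableSet {ξ : E3 | R ≤ ‖ξ‖} :=
    (isClosed_le continuous_const continuous_norm).measurableSet
  rw [← lintegral_const_mul' _ _ ENNReal.ofReal_ne_top]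
  refine (setLIntegral_mono' hS ?_).trans (setLIntegral_le_lintegral _ _)
  intro ξ hξ
  have hQ : 0 ≤ ((ξ 0) ^ 2 + (ξ 1) ^ 2 + |ξ 2|) ^ s := by positivity
  rw [← ENNReal.ofReal_mul hc.le, ← mul_assoc, ENNReal.ofReal_mul (by positivity)]
  gcongr
  exact hpt ξ hξ
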